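/- Let w be a word over the alphabet {x_0, x_1, x_2, …} of length n with ω(w) = 1. Then there is exactly one index i with 0 ≤ i < n such that the cyclic rotation of w by i positions lies in ℬ. -/

import Mathlib

/-- The weight of a word: the sum of `(a - 1)` over its letters, as an integer. -/
def wt (w : List ℕ) : ℤ := (w.map (fun a => (a : ℤ) - 1)).sum

/-- The set `ℬ` of words of weight 1 all of whose nonempty prefixes have positive weight. -/
def Bset : Set (List ℕ) :=
  {w | wt w = 1 ∧ ∀ j, 0 < j → j ≤ w.length → 0 < wt (w.take j)}

lemma wt_append (u v : List ℕ) : wt (u ++ v) = wt u + wt v := by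
  simp [wt]

lemma last_argmin (S : ℕ → ℤ) (n : ℕ) :
    ∃ i ≤ n, ∀ k ≤ n, (k ≤ i → S i ≤ S k) ∧ (i < k → S i < S k) := by
  induction n with
  | zero => exact ⟨0, le_rfl, fun k hk => by grind⟩
  | succ n ih =>
    obtain ⟨i, hi, h⟩ := ih
    by_cases hc : S (n + 1) ≤ S i
    · refine ⟨n + 1, le_rfl, fun k hk => ⟨fun _ => ?_, fun _ => by omega⟩⟩
      rcases Nat.lt_or_ge n k with h1 | h1
      · have : k = n + 1 := by omega
        rw [this]
      · have := h k h1
        rcases Nat.lt_or_ge i k with h2 | h2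
        · have := this.2 h2; omega
        · have := this.1 h2; omega
    · refine ⟨i, by omega, fun k hk => ?_⟩
      rcases Nat.lt_or_ge n k with h1 | h1
      · have : k = n + 1 := by omega
        subst this
        exact ⟨fun _ => by omega, fun _ => by omega⟩
      · exact h k h1

lemma wt_drop_take (w : List ℕ) (i j : ℕ) :
    wt ((w.drop i).take j) = wt (w.take (i + j)) - wt (w.take i) := by
  rw [List.take_add, wt_append]; ring

lemma mem_B_iff (w : List ℕ) (hw : wt w = 1) (i : ℕ) (hi : i < w.length) :
    w.rotate i ∈ Bset ↔ ∀ k ≤ w.length, (k ≤ i → wt (w.take i) ≤ wt (w.take k)) ∧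
      (i < k → wt (w.take i) < wt (w.take k)) := by
  have hs : wt (w.drop i) = 1 - wt (w.take i) := by
    have := wt_append (w.take i) (w.drop i)
    rw [List.take_append_drop] at this; omega
  have h0 : wt (w.take 0) = 0 := by simp [wt]
  have e1 : ∀ j, j ≤ w.length - i →
      wt ((w.rotate i).take j) = wt (w.take (i + j)) - wt (w.take i) := by
    intro j hj
    rw [List.rotate_eq_drop_append_take hi.le, List.take_append_of_le_length (by simpa using hj),
      wt_drop_take]
  have e2 : ∀ k, k ≤ i →
      wt ((w.rotate i).take (w.length - i + k)) = 1 - wt (w.take i) + wt (w.take k) := by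
    intro k hk
    have hl : w.length - i = (w.drop i).length := by simp
    rw [List.rotate_eq_drop_append_take hi.le, hl, List.take_length_add_append, wt_append, hs,
      List.take_take, min_eq_left hk]
  constructor
  · rintro ⟨-, h⟩ k hk
    rw [List.length_rotate] at h
    refine ⟨fun hki => ?_, fun hik => ?_⟩
    · have := h (w.length - i + k) (by omega) (by omega)
      rw [e2 k hki] at this; omega
    · have := h (k - i) (by omega) (by omega)
      rw [e1 _ (by omega), Nat.add_sub_cancel' hik.le] at this; omega
  · intro h
    refine ⟨?_, fun j hj hjl => ?_⟩
    · rw [List.rotate_eq_drop_append_take hi.le, wt_append, hs]; ring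
    · rw [List.length_rotate] at hjl
      rcases le_total j (w.length - i) with h1 | h1
      · rw [e1 j h1]
        have := (h (i + j) (by omega)).2 (by omega)
        omega
      · obtain ⟨k, rfl⟩ := Nat.exists_eq_add_of_le h1
        rw [e2 k (by omega)]
        have := (h k (by omega)).1 (by omega)
        omega

/-- If `w` has weight 1, there is exactly one rotation amount `i` with `0 ≤ i < length w`
such that the cyclic rotation of `w` by `i` lies in `ℬ`. -/
theorem unique_rotation_mem_B (w : List ℕ) (hw : wt w = 1) :
    ∃! i : ℕ, i < w.length ∧ w.rotate i ∈ Bset := by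
  obtain ⟨i, hi, h⟩ := last_argmin (fun k => wt (w.take k)) w.length
  have hin : i < w.length := by
    rcases hi.lt_or_eq with h1 | h1
    · exact h1
    · have := (h 0 (by omega)).1 (by omega)
      subst h1
      simp only [List.take_length, hw] at this
      simp [wt] at this
  refine ⟨i, ⟨hin, (mem_B_iff w hw i hin).2 h⟩, ?_⟩
  rintro i' ⟨hi', h'⟩
  rw [mem_B_iff w hw i' hi'] at h'
  have a := h i' hi'.le
  have b := h' i hin.le
  rcases lt_trichotomy i' i with h1 | h1 | h1
  · have := a.1 h1.le; have := b.2 h1; omega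
  · exact h1
  · have := a.2 h1; have := b.1 h1.le; omega
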